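/- Let K be a convex body in ℝ^n, let A > 0, and suppose that N(K, t·B₂ⁿ) ≤ exp(A·n/t²) for every t > 0, where N denotes the covering number. Then for every 1 ≤ k ≤ n−1 and every k-dimensional linear subspace H of ℝ^n, vol_k(P_H(K)) ≤ e^k · A^{k/2} · (n/k)^{k/2} · vol_k(B_H); equivalently vrad(P_H(K)) ≤ e·√A·√(n/k). -/

import Mathlib

open MeasureTheory Metric Set
open scoped ENNReal RealInnerProductSpace Pointwise

noncomputable section

/-- The covering number `N(A, B)`: the least number of translates of `B` needed to cover `A`. -/
def covN {n : ℕ} (A B : Set (EuclideanSpace ℝ (Fin n))) : ℕ∞ :=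
  sInf ((fun s : Finset (EuclideanSpace ℝ (Fin n)) => (s.card : ℕ∞)) ''
    {s | A ⊆ ⋃ x ∈ s, (fun b => x + b) '' B})

/-- The orthogonal projection of a set onto a subspace, viewed inside the ambient space. -/
def projSet {n : ℕ} (H : Submodule ℝ (EuclideanSpace ℝ (Fin n)))
    (A : Set (EuclideanSpace ℝ (Fin n))) : Set (EuclideanSpace ℝ (Fin n)) :=
  (fun x => (H.orthogonalProjectionOnto x : EuclideanSpace ℝ (Fin n))) '' A

/-- The volume radius of a subset of a `k`-dimensional subspace `H`: the `k`-th root of the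
ratio of its `k`-dimensional (Hausdorff) volume to that of the unit ball of `H`. -/
def vrad {n : ℕ} (k : ℕ) (H : Submodule ℝ (EuclideanSpace ℝ (Fin n)))
    (A : Set (EuclideanSpace ℝ (Fin n))) : ℝ≥0∞ :=
  (μH[(k : ℝ)] A / μH[(k : ℝ)] (closedBall (0 : EuclideanSpace ℝ (Fin n)) 1 ∩ (H : Set _)))
    ^ ((k : ℝ)⁻¹)

/-!
If `N` translates of `t • B₂ⁿ` cover `K`, their projections, which are balls of radius `t` in `H`,
cover `P_H K`, so `vol_k (P_H K) ≤ N t ^ k vol_k B_H`. At the scale `t = √(A n / k)` the covering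
hypothesis reads `N ≤ e ^ k`.
-/

open scoped NNReal

section NormedSpace

variable {E : Type*} [NormedAddCommGroup E] [NormedSpace ℝ E] {H : Submodule ℝ E}

lemma closedBall_inter_submodule_eq_vadd_smul {x : E} (hx : x ∈ H) {t : ℝ} (ht : 0 < t) :
    closedBall x t ∩ H = x +ᵥ t • (closedBall (0 : E) 1 ∩ H) := by
  have hH : x +ᵥ t • (H : Set E) = H := by
    ext y
    simp only [mem_vadd_set_iff_neg_vadd_mem, mem_smul_set_iff_inv_smul_mem₀ ht.ne',
      SetLike.mem_coe, vadd_eq_add, H.smul_mem_iff (inv_ne_zero ht.ne'),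
      H.add_mem_iff_right (H.neg_mem hx)]
  rw [smul_set_inter₀ ht.ne', vadd_set_inter, affinity_unitClosedBall ht.le, hH]

variable [MeasurableSpace E] [BorelSpace E] {t : ℝ≥0} {d : ℝ}

lemma hausdorffMeasure_closedBall_inter_submodule {x : E} (hx : x ∈ H) (ht : t ≠ 0) (hd : 0 ≤ d) :
    μH[d] (closedBall x t ∩ H) = (t : ℝ≥0∞) ^ d * μH[d] (closedBall (0 : E) 1 ∩ H) := by
  rw [closedBall_inter_submodule_eq_vadd_smul hx (NNReal.coe_pos.2 ht.pos),
    hausdorffMeasure_vadd _ (.inl hd), Measure.hausdorffMeasure_smul₀ hd (NNReal.coe_ne_zero.2 ht),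
    NNReal.nnnorm_eq, ENNReal.smul_def, smul_eq_mul, ENNReal.coe_rpow_of_ne_zero ht]

lemma hausdorffMeasure_le_card_mul_of_isCover {S : Set E} {N : Finset E} (hSH : S ⊆ H)
    (hNH : (N : Set E) ⊆ H) (hcover : IsCover t S (N : Set E)) (ht : t ≠ 0) (hd : 0 ≤ d) :
    μH[d] S ≤ N.card * ((t : ℝ≥0∞) ^ d * μH[d] (closedBall (0 : E) 1 ∩ H)) := by
  have hsub : S ⊆ ⋃ x ∈ N, closedBall x t ∩ H := by
    simpa only [← iUnion₂_inter, Finset.mem_coe] using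
      subset_inter (isCover_iff_subset_iUnion_closedBall.1 hcover) hSH
  calc
    μH[d] S ≤ ∑ x ∈ N, μH[d] (closedBall x t ∩ H) :=
      (measure_mono hsub).trans (measure_biUnion_finset_le _ _)
    _ = N.card * ((t : ℝ≥0∞) ^ d * μH[d] (closedBall (0 : E) 1 ∩ H)) := by
      rw [Finset.sum_congr rfl fun x hx ↦
        hausdorffMeasure_closedBall_inter_submodule (hNH hx) ht hd, Finset.sum_const, nsmul_eq_mul]

end NormedSpace

lemma hausdorffMeasure_starProjection_image_le_card_mul_of_isCover {E : Type*}
    [NormedAddCommGroup E] [InnerProductSpace ℝ E] [MeasurableSpace E] [BorelSpace E]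
    (H : Submodule ℝ E) [H.HasOrthogonalProjection] {S : Set E} {N : Finset E} {t : ℝ≥0}
    (hcover : IsCover t S (N : Set E)) (ht : t ≠ 0) {d : ℝ} (hd : 0 ≤ d) :
    μH[d] (H.starProjection '' S) ≤
      N.card * ((t : ℝ≥0∞) ^ d * μH[d] (closedBall (0 : E) 1 ∩ H)) := by
  classical
  have himage (T : Set E) : H.starProjection '' T ⊆ H :=
    image_subset_iff.2 fun x _ ↦ H.starProjection_apply_mem x
  have hcover_image : IsCover t (H.starProjection '' S) (N.image H.starProjection : Set E) := by
    simpa using hcover.image_lipschitz H.lipschitzWith_starProjection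
  refine (hausdorffMeasure_le_card_mul_of_isCover (himage S) (by simpa using himage N)
    hcover_image ht hd).trans ?_
  gcongr ?_ * _
  exact_mod_cast Finset.card_image_le

section EuclideanSpace

variable {n : ℕ} {K : Set (EuclideanSpace ℝ (Fin n))}

lemma exists_finset_card_eq_covN {B : Set (EuclideanSpace ℝ (Fin n))} (h : covN K B ≠ ⊤) :
    ∃ N : Finset (EuclideanSpace ℝ (Fin n)),
      K ⊆ (⋃ x ∈ N, (fun b ↦ x + b) '' B) ∧ (N.card : ℕ∞) = covN K B := by
  have hne : ((fun s : Finset (EuclideanSpace ℝ (Fin n)) ↦ (s.card : ℕ∞)) ''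
      {s | K ⊆ ⋃ x ∈ s, (fun b ↦ x + b) '' B}).Nonempty :=
    nonempty_iff_ne_empty.2 fun hempty ↦ h (by rw [covN, hempty, sInf_empty])
  exact csInf_mem hne

lemma exists_finset_isCover_card_eq_covN {t : ℝ≥0}
    (h : covN K ((t : ℝ) • closedBall 0 1) ≠ ⊤) :
    ∃ N : Finset (EuclideanSpace ℝ (Fin n)), IsCover t K (N : Set (EuclideanSpace ℝ (Fin n))) ∧
      (N.card : ℕ∞) = covN K ((t : ℝ) • closedBall 0 1) := by
  obtain ⟨N, hcover, hcard⟩ := exists_finset_card_eq_covN h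
  refine ⟨N, isCover_iff_subset_iUnion_closedBall.2 ?_, hcard⟩
  simpa only [← vadd_eq_add, image_vadd, affinity_unitClosedBall t.coe_nonneg, Finset.mem_coe]
    using hcover

variable (H : Submodule ℝ (EuclideanSpace ℝ (Fin n)))

lemma hausdorffMeasure_projSet_le_covN_mul {t : ℝ≥0} (ht : t ≠ 0)
    (h : covN K ((t : ℝ) • closedBall 0 1) ≠ ⊤) {d : ℝ} (hd : 0 ≤ d) :
    μH[d] (projSet H K) ≤ covN K ((t : ℝ) • closedBall 0 1) *
      ((t : ℝ≥0∞) ^ d * μH[d] (closedBall (0 : EuclideanSpace ℝ (Fin n)) 1 ∩ H)) := by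
  obtain ⟨N, hcover, hcard⟩ := exists_finset_isCover_card_eq_covN h
  rw [← hcard]
  exact hausdorffMeasure_starProjection_image_le_card_mul_of_isCover H hcover ht hd

lemma hausdorffMeasure_projSet_le_of_covN_le_exp {t : ℝ} (ht : 0 < t) {k : ℕ}
    (h : (covN K (t • closedBall 0 1) : ℝ≥0∞) ≤ ENNReal.ofReal (Real.exp k)) :
    μH[k] (projSet H K) ≤ ENNReal.ofReal (Real.exp 1 * t) ^ k *
      μH[k] (closedBall (0 : EuclideanSpace ℝ (Fin n)) 1 ∩ H) := by
  lift t to ℝ≥0 using ht.le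
  have ht_ne : t ≠ 0 := (NNReal.coe_pos.1 ht).ne'
  have hfinite : covN K ((t : ℝ) • closedBall 0 1) ≠ ⊤ :=
    ENat.toENNReal_ne_top.1 (ne_top_of_le_ne_top ENNReal.ofReal_ne_top h)
  have hexp : ENNReal.ofReal (Real.exp k) * (t : ℝ≥0∞) ^ (k : ℝ) =
      ENNReal.ofReal (Real.exp 1 * t) ^ k := by
    rw [ENNReal.ofReal_mul (Real.exp_pos 1).le, ENNReal.ofReal_coe_nnreal, mul_pow,
      ← ENNReal.ofReal_pow (Real.exp_pos 1).le, Real.exp_one_pow, ENNReal.rpow_natCast]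
  rw [← hexp, mul_assoc]
  refine (hausdorffMeasure_projSet_le_covN_mul H ht_ne hfinite k.cast_nonneg).trans ?_
  gcongr

variable {H}

lemma vrad_le_of_hausdorffMeasure_le {S : Set (EuclideanSpace ℝ (Fin n))} {k : ℕ} (hk : k ≠ 0)
    {r : ℝ≥0∞} (h : μH[k] S ≤ r ^ k * μH[k] (closedBall (0 : EuclideanSpace ℝ (Fin n)) 1 ∩ H)) :
    vrad k H S ≤ r :=
  calc
    vrad k H S ≤ (r ^ k) ^ (k : ℝ)⁻¹ :=
      ENNReal.rpow_le_rpow (ENNReal.div_le_of_le_mul h) (by positivity)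
    _ = r := ENNReal.pow_rpow_inv_natCast hk r

end EuclideanSpace

lemma mul_sqrt_mul_sqrt_pow (c : ℝ) {a b : ℝ} (ha : 0 ≤ a) (hb : 0 ≤ b) (k : ℕ) :
    (c * √a * √b) ^ k = c ^ k * a ^ ((k : ℝ) / 2) * b ^ ((k : ℝ) / 2) := by
  rw [Real.rpow_div_two_eq_sqrt _ ha, Real.rpow_div_two_eq_sqrt _ hb, Real.rpow_natCast,
    Real.rpow_natCast, mul_pow, mul_pow]

theorem stmt12_general {n : ℕ} {K : Set (EuclideanSpace ℝ (Fin n))} {A : ℝ} (hA : 0 < A)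
    (hcov : ∀ t : ℝ, 0 < t →
      (covN K (t • closedBall (0 : EuclideanSpace ℝ (Fin n)) 1) : ℝ≥0∞) ≤
        ENNReal.ofReal (Real.exp (A * n / t ^ 2)))
    {k : ℕ} (hk : 1 ≤ k) {H : Submodule ℝ (EuclideanSpace ℝ (Fin n))}
    (hH : Module.finrank ℝ H = k) :
    μH[(k : ℝ)] (projSet H K) ≤
        ENNReal.ofReal (Real.exp 1 ^ k * A ^ ((k : ℝ) / 2) * ((n : ℝ) / k) ^ ((k : ℝ) / 2)) *
          μH[(k : ℝ)] (closedBall (0 : EuclideanSpace ℝ (Fin n)) 1 ∩ (H : Set _)) ∧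
      vrad k H (projSet H K) ≤
        ENNReal.ofReal (Real.exp 1 * √A * √((n : ℝ) / k)) := by
  have hkn : k ≤ n := by simpa [hH] using H.finrank_le
  have hk_pos : (0 : ℝ) < k := by exact_mod_cast hk
  have hn_pos : (0 : ℝ) < n := hk_pos.trans_le (by exact_mod_cast hkn)
  have ht : 0 < √A * √((n : ℝ) / k) := by positivity
  have hscale : A * n / (√A * √((n : ℝ) / k)) ^ 2 = k := by
    rw [mul_pow, Real.sq_sqrt hA.le, Real.sq_sqrt (by positivity)]
    field_simp
  have hvol := hausdorffMeasure_projSet_le_of_covN_le_exp H ht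
    ((hcov _ ht).trans_eq (by rw [hscale]))
  rw [← mul_assoc] at hvol
  refine ⟨?_, vrad_le_of_hausdorffMeasure_le (by omega) hvol⟩
  rwa [← mul_sqrt_mul_sqrt_pow _ hA.le (by positivity),
    ENNReal.ofReal_pow (by positivity)]

/-- Sudakov-type covering hypothesis implies a volume bound for all `k`-dimensional projections:
`vol_k(P_H(K)) ≤ e^k·A^{k/2}·(n/k)^{k/2}·vol_k(B_H)`, equivalently
`vrad(P_H(K)) ≤ e·√A·√(n/k)`. -/
theorem stmt12 (n : ℕ) (K : Set (EuclideanSpace ℝ (Fin n)))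
    (hK : IsCompact K) (hKc : Convex ℝ K) (hint : (interior K).Nonempty)
    (A : ℝ) (hA : 0 < A)
    (hcov : ∀ t : ℝ, 0 < t →
      (covN K (t • closedBall (0 : EuclideanSpace ℝ (Fin n)) 1) : ℝ≥0∞) ≤
        ENNReal.ofReal (Real.exp (A * n / t ^ 2))) :
    ∀ k : ℕ, 1 ≤ k → k ≤ n - 1 →
      ∀ H : Submodule ℝ (EuclideanSpace ℝ (Fin n)), Module.finrank ℝ H = k →
        μH[(k : ℝ)] (projSet H K) ≤
            ENNReal.ofReal (Real.exp 1 ^ k * A ^ ((k : ℝ) / 2) * ((n : ℝ) / k) ^ ((k : ℝ) / 2)) *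
              μH[(k : ℝ)] (closedBall (0 : EuclideanSpace ℝ (Fin n)) 1 ∩ (H : Set _)) ∧
          vrad k H (projSet H K) ≤
            ENNReal.ofReal (Real.exp 1 * Real.sqrt A * Real.sqrt ((n : ℝ) / k)) := by
  intro k hk _ H hH
  exact stmt12_general hA hcov hk hH
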